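/- Let σ > 3/4 be a real number and let η be a real number with 0 < η < 2σ − 3/2. Then the series Σ_{n ≥ 3, n ∉ 𝒯} n^{1+η} · ε(n)^{−2σ}, taken over the integers n ≥ 3 not belonging to 𝒯, converges. -/

import Mathlib

/-- `ε(n) = (n + √(n² − 4))/2`. -/
noncomputable def eps (n : ℤ) : ℝ := ((n : ℝ) + Real.sqrt ((n : ℝ) ^ 2 - 4)) / 2

/-- The set `𝒯` of integers `n ≥ 3` such that `ε(n)` is not a proper power `ε(n₀)^k`
with `k ≥ 2`, `n₀ ≥ 3`. -/
def Tset : Set ℤ :=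
  {n : ℤ | 3 ≤ n ∧ ¬ ∃ k : ℕ, 2 ≤ k ∧ ∃ n₀ : ℤ, 3 ≤ n₀ ∧ eps n = eps n₀ ^ k}

/-!
Since `ε(n) ≍ n`, the terms are comparable to `ε(n) ^ t` with `t = 1 + η - 2σ < -1/2`. Off `𝒯` we
have `ε(n) = ε(m) ^ k` with `k ≥ 2` and `m ≥ 3`, and `ε` is injective, so the sum is at most
`∑_{k ≥ 2} ∑_{m ≥ 3} ε(m) ^ (t * k)`. As `ε(m) ^ t ≤ (3/2) ^ t < 1`, the sum over `k` is a geometric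
series comparable to its first term `ε(m) ^ (2t) ≍ m ^ (2t)`, and `2t < -1`.
-/

open Asymptotics Filter Set

theorem half_le_eps (n : ℤ) : (n : ℝ) / 2 ≤ eps n := by
  unfold eps
  linarith [Real.sqrt_nonneg ((n : ℝ) ^ 2 - 4)]

theorem eps_nonneg {n : ℤ} (hn : 0 ≤ n) : 0 ≤ eps n :=
  (div_nonneg (Int.cast_nonneg hn) zero_le_two).trans (half_le_eps n)

theorem eps_pos {n : ℤ} (hn : 0 < n) : 0 < eps n :=
  (half_pos (Int.cast_pos.2 hn)).trans_le (half_le_eps n)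

theorem eps_le {n : ℤ} (hn : 0 ≤ n) : eps n ≤ n := by
  have hsqrt : √((n : ℝ) ^ 2 - 4) ≤ n := Real.sqrt_le_iff.2 ⟨Int.cast_nonneg hn, by linarith⟩
  unfold eps
  linarith

theorem eps_sq_add_one {n : ℤ} (hn : 2 ≤ n) : eps n ^ 2 + 1 = n * eps n := by
  have hn' : (2 : ℝ) ≤ n := mod_cast hn
  have hsq := Real.sq_sqrt (show (0 : ℝ) ≤ (n : ℝ) ^ 2 - 4 by nlinarith)
  unfold eps
  linear_combination hsq / 4

theorem eps_add_inv_eps {n : ℤ} (hn : 2 ≤ n) : eps n + (eps n)⁻¹ = n := by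
  have hpos : 0 < eps n := eps_pos (by lia)
  field_simp
  rw [eps_sq_add_one hn, mul_comm]

theorem eps_injOn : InjOn eps (Ici 2) := fun m hm n hn h => by
  have hcast : (m : ℝ) = n := by rw [← eps_add_inv_eps hm, h, eps_add_inv_eps hn]
  exact_mod_cast hcast

theorem eps_comp_isTheta {ι : Type*} {a : ι → ℤ} (ha : ∀ i, 0 ≤ a i) (l : Filter ι) :
    (fun i => eps (a i)) =Θ[l] fun i => (a i : ℝ) := by
  have norm_eps (i : ι) : ‖eps (a i)‖ = eps (a i) := Real.norm_of_nonneg (eps_nonneg (ha i))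
  have norm_intCast (i : ι) : ‖(a i : ℝ)‖ = a i := Real.norm_of_nonneg (Int.cast_nonneg (ha i))
  refine ⟨isBigO_of_le l fun i => ?_, isBigO_of_le' (c := 2) l fun i => ?_⟩ <;>
    rw [norm_eps, norm_intCast]
  · exact eps_le (ha i)
  · linarith [half_le_eps (a i)]

theorem eps_comp_rpow_isTheta {ι : Type*} {a : ι → ℤ} (ha : ∀ i, 0 ≤ a i) (l : Filter ι) (t : ℝ) :
    (fun i => eps (a i) ^ t) =Θ[l] fun i => (a i : ℝ) ^ t :=
  (eps_comp_isTheta ha l).rpow (.of_forall fun i => eps_nonneg (ha i))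
    (.of_forall fun i => Int.cast_nonneg (ha i))

theorem summable_eps_rpow {t : ℝ} (ht : t < -1) :
    Summable fun m : {m : ℤ // 3 ≤ m} => eps m ^ t := by
  have hnonneg (m : {m : ℤ // 3 ≤ m}) : 0 ≤ (m : ℤ) := by lia
  rw [(eps_comp_rpow_isTheta hnonneg cofinite t).summable_iff]
  refine ((Real.summable_abs_int_rpow (b := -t) (by linarith)).comp_injective
    Subtype.val_injective).congr fun m => ?_
  rw [Function.comp_apply, neg_neg, abs_of_nonneg (Int.cast_nonneg (hnonneg m))]

theorem summable_pow_add_of_le {ι : Type*} {u : ι → ℝ} {r : ℝ} (hu : ∀ i, 0 ≤ u i)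
    (hur : ∀ i, u i ≤ r) (hr₀ : 0 ≤ r) (hr : r < 1) {k : ℕ} (hk : Summable fun i => u i ^ k) :
    Summable fun p : ℕ × ι => u p.2 ^ (p.1 + k) := by
  refine ((summable_geometric_of_lt_one hr₀ hr).mul_of_nonneg hk
    (fun j => pow_nonneg hr₀ j) (fun i => pow_nonneg (hu i) k)).of_nonneg_of_le
    (fun p => pow_nonneg (hu p.2) _) fun p => ?_
  rw [pow_add]
  exact mul_le_mul_of_nonneg_right (pow_le_pow_left₀ (hu p.2) (hur p.2) p.1)
    (pow_nonneg (hu p.2) k)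

theorem summable_eps_pow_rpow {t : ℝ} (ht : t < -(1 / 2)) :
    Summable fun p : ℕ × {m : ℤ // 3 ≤ m} => (eps p.2 ^ (p.1 + 2)) ^ t := by
  have hnonneg (m : {m : ℤ // 3 ≤ m}) : 0 ≤ eps m := eps_nonneg (by lia)
  have hle (m : {m : ℤ // 3 ≤ m}) : eps m ^ t ≤ (3 / 2) ^ t := by
    have hm : (3 : ℝ) ≤ (m : ℤ) := mod_cast m.2
    exact Real.rpow_le_rpow_of_nonpos (by norm_num) (by linarith [half_le_eps m]) (by linarith)
  have hlt : (3 / 2 : ℝ) ^ t < 1 :=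
    Real.rpow_lt_one_of_one_lt_of_neg (by norm_num) (by linarith)
  have hsq : Summable fun m : {m : ℤ // 3 ≤ m} => (eps m ^ t) ^ 2 := by
    refine (summable_eps_rpow (t := t * 2) (by linarith)).congr fun m => ?_
    exact_mod_cast Real.rpow_mul_natCast (hnonneg m) t 2
  refine (summable_pow_add_of_le (fun m => Real.rpow_nonneg (hnonneg m) t) hle (by positivity) hlt
    hsq).congr fun p => ?_
  exact Real.rpow_pow_comm (hnonneg p.2) t _

theorem range_eps_compl_Tset_subset :
    range (fun n : {n : ℤ // 3 ≤ n ∧ n ∉ Tset} => eps n) ⊆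
      range fun p : ℕ × {m : ℤ // 3 ≤ m} => eps p.2 ^ (p.1 + 2) := by
  rintro _ ⟨⟨n, hn, hT⟩, rfl⟩
  obtain ⟨k, hk, m, hm, h⟩ : ∃ k : ℕ, 2 ≤ k ∧ ∃ m : ℤ, 3 ≤ m ∧ eps n = eps m ^ k := by
    simpa [Tset, hn] using hT
  obtain ⟨j, rfl⟩ := Nat.exists_eq_add_of_le' hk
  exact ⟨(j, ⟨m, hm⟩), h.symm⟩

theorem summable_eps_rpow_compl_Tset {t : ℝ} (ht : t < -(1 / 2)) :
    Summable fun n : {n : ℤ // 3 ≤ n ∧ n ∉ Tset} => eps n ^ t := by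
  have hinj : Function.Injective fun n : {n : ℤ // 3 ≤ n ∧ n ∉ Tset} => eps n := fun a b h =>
    Subtype.ext (eps_injOn (mem_Ici.2 (by lia)) (mem_Ici.2 (by lia)) h)
  obtain ⟨f, hf⟩ := range_subset_range_iff_exists_comp.1 range_eps_compl_Tset_subset
  have hf_inj : Function.Injective f := .of_comp (hf ▸ hinj)
  exact ((summable_eps_pow_rpow ht).comp_injective hf_inj).congr fun n =>
    congrArg (· ^ t) (congrFun hf n).symm

theorem summable_complement_Tset_general {s t : ℝ} (hst : s + t < -(1 / 2)) :
    Summable fun n : {n : ℤ // 3 ≤ n ∧ n ∉ Tset} => ((n : ℤ) : ℝ) ^ s * eps n ^ t := by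
  have hnonneg (n : {n : ℤ // 3 ≤ n ∧ n ∉ Tset}) : 0 ≤ (n : ℤ) := by lia
  have hTheta := (eps_comp_rpow_isTheta hnonneg cofinite s).symm.mul
    (isTheta_refl (fun n : {n : ℤ // 3 ≤ n ∧ n ∉ Tset} => eps n ^ t) cofinite)
  refine hTheta.summable_iff.2 ((summable_eps_rpow_compl_Tset hst).congr fun n => ?_)
  exact Real.rpow_add (eps_pos (by lia)) s t

/-- For `σ > 3/4` and `0 < η < 2σ − 3/2`, the series
`Σ_{n ≥ 3, n ∉ 𝒯} n^{1+η} ε(n)^{−2σ}` converges. -/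
theorem summable_complement_Tset (σ η : ℝ) (hσ : 3 / 4 < σ) (hη : 0 < η)
    (hη' : η < 2 * σ - 3 / 2) :
    Summable (fun n : {n : ℤ // 3 ≤ n ∧ n ∉ Tset} =>
      ((n : ℤ) : ℝ) ^ ((1 : ℝ) + η) * eps n ^ (-(2 * σ))) :=
  summable_complement_Tset_general (by linarith)
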